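/- Let m ≥ 1. For α ∈ ℝ, α ≠ 0, define the m×m matrix U(α) by U(α)_{ij} = sinh(α(i+j+m)/2)/sinh(3α(i+j+m)/2) − sinh(α(j−i+m)/2)/sinh(3α(j−i+m)/2). Then the limit as α → 0 (α ≠ 0) of det U(α) / α^{2m²} exists and equals [∏_{1≤i<j≤2m} 3(j−i)] · [∏_{i=1}^{2m+1} ∏_{j=1}^{m} (1+3(2j−i))] / [∏_{i=1}^{m} ∏_{j=1}^{m} 9·(m+j−i)·(m+j+i)]. -/

import Mathlib

open Finset Filter

/-!
Up to exponential factors, `det U(α)` (with `β` held fixed) is a polynomial in `X = exp α` of degree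
at most `m (2m + 1)`. The identity `sinh (u + v) - sinh (u - v) = 2 cosh u sinh v` shows that
replacing `α - β` by `α + β` changes the matrix by a matrix of rank one. As the matrix vanishes at
`α = 0` and at `α = β`, its rank at `α = k β` is at most `|k| / 2` (rounded down), so `exp (k β)` is
a root of the determinant of multiplicity at least `m - |k| / 2`. These roots exhaust the degree,
and the constant is found at `X = 0`, where the matrix becomes `-1 / (2 sinh (β (i + j + m) / 2))`.
Now let `β = c α`: after division by `α` each root contributes a factor that tends to a linear
polynomial in `c`, and the constant tends to a Cauchy determinant.
-/

section MatrixRank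

open Polynomial

variable {ι κ K R : Type*}

theorem matrix_rank_neg [Fintype κ] [CommRing R] (A : Matrix ι κ R) : (-A).rank = A.rank := by
  rw [← neg_one_smul R A]
  exact Matrix.rank_smul_of_mem_nonZeroDivisors A isUnit_one.neg.mem_nonZeroDivisors

theorem matrix_rank_add_le [Finite ι] [Fintype κ] [Field K] (A B : Matrix ι κ K) :
    (A + B).rank ≤ A.rank + B.rank := by
  have hrange : LinearMap.range (A + B).mulVecLin ≤
      LinearMap.range A.mulVecLin ⊔ LinearMap.range B.mulVecLin := by
    rw [Matrix.mulVecLin_add]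
    exact LinearMap.range_add_le _ _
  exact (Submodule.finrank_mono hrange).trans (Submodule.finrank_add_le_finrank_add_finrank _ _)

variable [Fintype ι] [DecidableEq ι]

theorem pow_card_dvd_det [CommRing R] {r : R} {s : Finset ι} {M : Matrix ι ι R}
    (h : ∀ i ∈ s, ∀ j, r ∣ M i j) : r ^ #s ∣ M.det := by
  rw [← Matrix.det_transpose, Matrix.det_apply']
  refine Finset.dvd_sum fun σ _ => Dvd.dvd.mul_left ?_ _
  calc r ^ #s = ∏ _i ∈ s, r := (Finset.prod_const r).symm
    _ ∣ ∏ i ∈ s, M i (σ i) := Finset.prod_dvd_prod_of_dvd _ _ fun i hi => h i hi _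
    _ ∣ ∏ i, M i (σ i) := Finset.prod_dvd_prod_of_subset _ _ _ (Finset.subset_univ s)

theorem X_sub_C_pow_dvd_det [Field K] (M : Matrix ι ι K[X]) (a : K) :
    (X - C a) ^ (Fintype.card ι - (M.map (eval a)).rank) ∣ M.det := by
  classical
  -- Constant transvections diagonalise `M` at `a`, so the rows where the diagonal vanishes there
  -- become divisible by `X - a`.
  obtain ⟨L, L', D, hD⟩ :=
    Matrix.Pivot.exists_list_transvec_mul_mul_list_transvec_eq_diagonal (M.map (eval a))
  set P := (L.map Matrix.TransvectionStruct.toMatrix).prod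
  set Q := (L'.map Matrix.TransvectionStruct.toMatrix).prod
  have hPdet : P.det = 1 := Matrix.TransvectionStruct.det_toMatrix_prod L
  have hQdet : Q.det = 1 := Matrix.TransvectionStruct.det_toMatrix_prod L'
  have hcorank : #{i | D i = 0} = Fintype.card ι - (M.map (eval a)).rank := by
    rw [← Matrix.rank_mul_eq_right_of_isUnit_det P _ (by simp [hPdet]),
      ← Matrix.rank_mul_eq_left_of_isUnit_det Q _ (by simp [hQdet]), hD, Matrix.rank_diagonal,
      Fintype.card_subtype, ← Finset.card_univ,
      ← Finset.card_filter_add_card_filter_not (s := univ) (fun i => D i = 0),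
      Nat.add_sub_cancel]
  have heval : (P.map C * M * Q.map C).map (eval a) = Matrix.diagonal D := by
    have hC (A : Matrix ι ι K) : (A.map C).map (evalRingHom a) = A := by ext; simp
    rw [← hD, ← coe_evalRingHom, Matrix.map_mul, Matrix.map_mul, hC, hC]
  have hdet : (P.map C * M * Q.map C).det = M.det := by
    have hC (A : Matrix ι ι K) : (A.map C).det = C A.det := (RingHom.map_det C A).symm
    rw [Matrix.det_mul, Matrix.det_mul, hC, hC, hPdet, hQdet, C_1, one_mul, mul_one]
  rw [← hcorank, ← hdet]
  refine pow_card_dvd_det fun i hi j => dvd_iff_isRoot.2 ?_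
  have hij := congrFun₂ heval i j
  rwa [Matrix.map_apply, Matrix.diagonal_apply, (Finset.mem_filter.1 hi).2, ite_self] at hij

theorem natDegree_det_le_sum_add_sum [CommRing R] {M : Matrix ι ι R[X]} {a b : ι → ℕ}
    (h : ∀ i j, (M i j).natDegree ≤ a i + b j) : M.det.natDegree ≤ ∑ i, a i + ∑ j, b j := by
  rw [Matrix.det_apply]
  refine natDegree_sum_le_of_forall_le _ _ fun σ _ => (natDegree_smul_le _ _).trans ?_
  calc (∏ j, M (σ j) j).natDegree ≤ ∑ j, (M (σ j) j).natDegree := natDegree_prod_le _ _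
    _ ≤ ∑ j, (a (σ j) + b j) := Finset.sum_le_sum fun j _ => h _ _
    _ = ∑ i, a i + ∑ j, b j := by rw [Finset.sum_add_distrib, Equiv.sum_comp σ a]

end MatrixRank

section CauchyDeterminant

theorem det_cauchy {K : Type*} [Field K] {n : ℕ} (x y : Fin n → K) (h : ∀ i j, x i + y j ≠ 0) :
    (Matrix.of fun i j => (x i + y j)⁻¹).det =
      (∏ i, ∏ j ∈ Ioi i, (x j - x i) * (y j - y i)) / ∏ i, ∏ j, (x i + y j) := by
  induction n with
  | zero => simp
  | succ n ih =>
    -- Clearing the first column with the first row leaves a rescaled Cauchy matrix.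
    let B : Matrix (Fin (n + 1)) (Fin (n + 1)) K := Matrix.of fun i j =>
      (x i + y j)⁻¹ - (if i = 0 then 0 else (x 0 + y 0) / (x i + y 0)) * (x 0 + y j)⁻¹
    have hB : (Matrix.of fun i j => (x i + y j)⁻¹).det = B.det :=
      Matrix.det_eq_of_forall_row_eq_smul_add_const
        (fun i => if i = 0 then 0 else (x 0 + y 0) / (x i + y 0)) 0 (if_pos rfl)
        fun i j => by simp [B]
    have hcol (i : Fin n) : B i.succ 0 = 0 := by
      have := h 0 0
      simp only [B, Matrix.of_apply, Fin.succ_ne_zero, if_false]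
      field_simp
      simp
    have hminor : B.submatrix Fin.succ Fin.succ = Matrix.of fun i j =>
        ((x i.succ - x 0) / (x i.succ + y 0)) * Matrix.of (fun i j =>
          ((y j.succ - y 0) / (x 0 + y j.succ)) *
            Matrix.of (fun i j => (x (Fin.succ i) + y (Fin.succ j))⁻¹) i j) i j := by
      ext i j
      have h₁ := h i.succ j.succ
      have h₂ := h i.succ 0
      have h₃ := h 0 j.succ
      simp only [B, Matrix.submatrix_apply, Matrix.of_apply, Fin.succ_ne_zero, if_false]
      field_simp
      ring
    have hdet : B.det = (x 0 + y 0)⁻¹ * (B.submatrix Fin.succ Fin.succ).det := by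
      have hB00 : B 0 0 = (x 0 + y 0)⁻¹ := by simp [B]
      rw [Matrix.det_succ_column_zero, Fin.sum_univ_succ]
      simp [hcol, hB00, Fin.succAbove_zero]
    rw [hB, hdet, hminor, Matrix.det_mul_column, Matrix.det_mul_row,
      ih (fun i => x i.succ) (fun j => y j.succ) fun i j => h _ _]
    simp only [Fin.prod_univ_succ, Fin.prod_Ioi_succ, Fin.prod_Ioi_zero, Finset.prod_mul_distrib,
      Finset.prod_div_distrib]
    field_simp

section DoubleProduct

variable {M : Type*} [CommMonoid M]

theorem prod_range_two_mul_prod_range (m : ℕ) (f : ℕ → ℕ → M) :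
    ∏ j ∈ range (2 * m), ∏ i ∈ range j, f i j =
      (∏ j ∈ range m, ∏ i ∈ range j, f i j) *
        ((∏ j ∈ range m, ∏ i ∈ range m, f i (m + j)) *
          ∏ j ∈ range m, ∏ i ∈ range j, f (m + i) (m + j)) := by
  simp only [two_mul, Finset.prod_range_add, Finset.prod_mul_distrib]

theorem prod_univ_prod_Ioi_eq_prod_range (n : ℕ) (f : ℕ → ℕ → M) :
    ∏ i : Fin n, ∏ j ∈ Ioi i, f i j = ∏ j ∈ range n, ∏ i ∈ range j, f i j := by
  rw [Finset.prod_comm' (t' := univ) (s' := Iio) (by simp), ← Fin.prod_univ_eq_prod_range]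
  refine Finset.prod_congr rfl fun j _ => ?_
  rw [← Nat.Iio_eq_range, ← Fin.map_valEmbedding_Iio, Finset.prod_map]
  rfl

theorem prod_Icc_one_eq_prod_range (n : ℕ) (f : ℕ → M) :
    ∏ i ∈ Icc 1 n, f i = ∏ i ∈ range n, f (i + 1) := by
  rw [Finset.range_eq_Ico, Finset.prod_Ico_add' f 0 n 1]
  rfl

end DoubleProduct

theorem prod_Icc_two_mul_prod_Ico_mul_sub {R : Type*} [CommRing R] (m : ℕ) (c : R) :
    ∏ j ∈ Icc 1 (2 * m), ∏ i ∈ Ico 1 j, c * ((j : R) - (i : R)) =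
      (∏ j ∈ range m, ∏ i ∈ range m, c * ((m : R) + j - i)) *
        ∏ j ∈ range m, ∏ i ∈ range j, (c * ((j : R) - i)) ^ 2 := by
  have hshift : ∏ j ∈ Icc 1 (2 * m), ∏ i ∈ Ico 1 j, c * ((j : R) - (i : R)) =
      ∏ j ∈ range (2 * m), ∏ i ∈ range j, c * ((j : R) - i) := by
    simp only [prod_Icc_one_eq_prod_range, Finset.prod_Ico_eq_prod_range, Nat.add_sub_cancel]
    simp [add_comm]
  rw [hshift, prod_range_two_mul_prod_range, mul_left_comm]
  simp only [← Finset.prod_mul_distrib, sq]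
  push_cast
  simp only [add_sub_add_left_eq_sub]

theorem det_cauchy_consecutive {K : Type*} [Field K] [CharZero K] (m : ℕ) {c : K} (hc : c ≠ 0) :
    (Matrix.of fun i j : Fin m =>
      (c * (((i + 1 : ℕ) : K) + ((j + 1 + m : ℕ) : K)))⁻¹).det =
      (∏ j ∈ Icc 1 (2 * m), ∏ i ∈ Ico 1 j, c * ((j : K) - (i : K))) /
        ∏ i ∈ Icc 1 m, ∏ j ∈ Icc 1 m,
          c ^ 2 * ((m : K) + (j : K) - (i : K)) * ((m : K) + (j : K) + (i : K)) := by
  let x (i : ℕ) : K := c * ((i + 1 : ℕ) : K)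
  let y (j : ℕ) : K := c * ((j + 1 + m : ℕ) : K)
  have hxy (i j : ℕ) : x i + y j ≠ 0 := by
    rw [← mul_add, ← Nat.cast_add]
    exact mul_ne_zero hc (Nat.cast_ne_zero.2 (by lia))
  have hcross : ∏ j ∈ range m, ∏ i ∈ range m, c * ((m : K) + j - i) ≠ 0 := by
    refine Finset.prod_ne_zero_iff.2 fun j _ => Finset.prod_ne_zero_iff.2 fun i hi => ?_
    have := Finset.mem_range.1 hi
    rw [← Nat.cast_add]
    exact mul_ne_zero hc (sub_ne_zero.2 (Nat.cast_injective.ne (by lia)))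
  have hden : ∏ i ∈ Icc 1 m, ∏ j ∈ Icc 1 m,
      c ^ 2 * ((m : K) + (j : K) - (i : K)) * ((m : K) + (j : K) + (i : K)) =
      (∏ j ∈ range m, ∏ i ∈ range m, c * ((m : K) + j - i)) *
        ∏ i ∈ range m, ∏ j ∈ range m, (x i + y j) := by
    rw [Finset.prod_comm (s := range m) (t := range m)]
    simp only [prod_Icc_one_eq_prod_range, ← Finset.prod_mul_distrib]
    congr! 2
    simp only [x, y]
    push_cast
    ring
  calc (Matrix.of fun i j : Fin m => (c * (((i + 1 : ℕ) : K) + ((j + 1 + m : ℕ) : K)))⁻¹).det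
      = (Matrix.of fun i j : Fin m => (x i + y j)⁻¹).det := by simp only [x, y, mul_add]
    _ = (∏ i : Fin m, ∏ j ∈ Ioi i, (x j - x i) * (y j - y i)) /
          ∏ i : Fin m, ∏ j : Fin m, (x i + y j) :=
      det_cauchy (fun i : Fin m => x i) (fun j => y j) fun i j => hxy i j
    _ = (∏ j ∈ range m, ∏ i ∈ range j, (c * ((j : K) - i)) ^ 2) /
          ∏ i ∈ range m, ∏ j ∈ range m, (x i + y j) := by
      rw [prod_univ_prod_Ioi_eq_prod_range m fun i j => (x j - x i) * (y j - y i),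
        ← Fin.prod_univ_eq_prod_range (fun i => ∏ j ∈ range m, (x i + y j))]
      simp only [← Fin.prod_univ_eq_prod_range (fun j => x _ + y j)]
      congr! 4
      simp only [x, y]
      push_cast
      ring
    _ = _ := by
      rw [prod_Icc_two_mul_prod_Ico_mul_sub, hden, mul_div_mul_left _ _ hcross]

end CauchyDeterminant

section KuperbergMatrix

variable {ι κ : Type*}

/-- The matrix of Kuperberg's determinant identity. The matrix `U(α)` of the paper has `x i = i`,
`y j = j + m` (indices from `1`) and `β = 3 α`. -/
noncomputable def kuperbergMatrix (x : ι → ℝ) (y : κ → ℝ) (α β : ℝ) : Matrix ι κ ℝ :=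
  Matrix.of fun i j =>
    Real.sinh (α * (x i + y j) / 2) / Real.sinh (β * (x i + y j) / 2) -
      Real.sinh (α * (y j - x i) / 2) / Real.sinh (β * (y j - x i) / 2)

variable {x : ι → ℝ} {y : κ → ℝ} {β : ℝ}

theorem kuperbergMatrix_neg_left (x : ι → ℝ) (y : κ → ℝ) (α β : ℝ) :
    kuperbergMatrix x y (-α) β = -kuperbergMatrix x y α β := by
  ext i j
  simp only [kuperbergMatrix, Matrix.of_apply, Matrix.neg_apply, neg_mul, neg_div, Real.sinh_neg]
  ring

theorem kuperbergMatrix_zero_left (x : ι → ℝ) (y : κ → ℝ) (β : ℝ) :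
    kuperbergMatrix x y 0 β = 0 := by
  ext i j
  simp [kuperbergMatrix]

theorem sinh_mul_div_two_ne_zero {c : ℝ} (hβ : β ≠ 0) (hc : c ≠ 0) :
    Real.sinh (β * c / 2) ≠ 0 :=
  Real.sinh_ne_zero.2 (div_ne_zero (mul_ne_zero hβ hc) two_ne_zero)

theorem kuperbergMatrix_self (hβ : β ≠ 0) (hadd : ∀ i j, x i + y j ≠ 0)
    (hsub : ∀ i j, y j - x i ≠ 0) : kuperbergMatrix x y β β = 0 := by
  ext i j
  simp [kuperbergMatrix, div_self (sinh_mul_div_two_ne_zero hβ (hadd i j)),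
    div_self (sinh_mul_div_two_ne_zero hβ (hsub i j))]

theorem kuperbergMatrix_add_left (α : ℝ) (hβ : β ≠ 0) (hadd : ∀ i j, x i + y j ≠ 0)
    (hsub : ∀ i j, y j - x i ≠ 0) :
    kuperbergMatrix x y (α + β) β = kuperbergMatrix x y (α - β) β +
      Matrix.vecMulVec (fun i => 4 * Real.sinh (α * x i / 2)) fun j => Real.sinh (α * y j / 2) := by
  have hstep {z : ℝ} (hz : z ≠ 0) :
      Real.sinh ((α + β) * z / 2) / Real.sinh (β * z / 2) =
        Real.sinh ((α - β) * z / 2) / Real.sinh (β * z / 2) + 2 * Real.cosh (α * z / 2) := by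
    have := sinh_mul_div_two_ne_zero hβ hz
    rw [add_mul, sub_mul, add_div, sub_div, Real.sinh_add, Real.sinh_sub]
    field_simp
    ring
  ext i j
  simp only [kuperbergMatrix, Matrix.of_apply, Matrix.add_apply, Matrix.vecMulVec_apply,
    hstep (hadd i j), hstep (hsub i j), mul_add α, mul_sub α, add_div, sub_div, Real.cosh_add,
    Real.cosh_sub]
  ring

theorem rank_kuperbergMatrix_natCast_mul_le [Finite ι] [Fintype κ] (n : ℕ) (hβ : β ≠ 0)
    (hadd : ∀ i j, x i + y j ≠ 0) (hsub : ∀ i j, y j - x i ≠ 0) :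
    (kuperbergMatrix x y (n * β) β).rank ≤ n / 2 := by
  induction n using Nat.twoStepInduction with
  | zero => simp [kuperbergMatrix_zero_left]
  | one => simp [kuperbergMatrix_self hβ hadd hsub]
  | more n ih _ =>
    have hup : ((n + 2 : ℕ) : ℝ) * β = (n + 1) * β + β := by push_cast; ring
    have hdown : ((n : ℝ) + 1) * β - β = n * β := by ring
    rw [hup, kuperbergMatrix_add_left _ hβ hadd hsub, hdown, Nat.add_div_right n two_pos]
    exact (matrix_rank_add_le _ _).trans (add_le_add ih (Matrix.rank_vecMulVec_le _ _))

theorem rank_kuperbergMatrix_intCast_mul_le [Finite ι] [Fintype κ] (k : ℤ) (hβ : β ≠ 0)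
    (hadd : ∀ i j, x i + y j ≠ 0) (hsub : ∀ i j, y j - x i ≠ 0) :
    (kuperbergMatrix x y (k * β) β).rank ≤ k.natAbs / 2 := by
  obtain ⟨n, rfl | rfl⟩ := k.eq_nat_or_neg
  · simpa using rank_kuperbergMatrix_natCast_mul_le n hβ hadd hsub
  · rw [Int.cast_neg, neg_mul, kuperbergMatrix_neg_left, matrix_rank_neg]
    simpa using rank_kuperbergMatrix_natCast_mul_le n hβ hadd hsub

end KuperbergMatrix

section KuperbergDeterminant

open Polynomial

variable {ι κ : Type*}

theorem exp_sub_exp_eq_mul_sinh (u v : ℝ) :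
    Real.exp u - Real.exp v = Real.exp ((u + v) / 2) * (2 * Real.sinh ((u - v) / 2)) := by
  rw [Real.sinh_eq, mul_div_cancel₀ _ two_ne_zero, mul_sub, ← Real.exp_add, ← Real.exp_add]
  ring_nf

/-- The Kuperberg matrix as a matrix of polynomials in `X = exp α`: the entry `(i, j)` is multiplied
by `exp (α (a i + b j) / 2)`, which clears the negative exponents. -/
noncomputable def kuperbergPolyMatrix (a : ι → ℕ) (b : κ → ℕ) (β : ℝ) : Matrix ι κ ℝ[X] :=
  Matrix.of fun i j =>
    C (2 * Real.sinh (β * ((a i : ℝ) + b j) / 2))⁻¹ * (X ^ (a i + b j) - 1) -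
      C (2 * Real.sinh (β * ((b j : ℝ) - a i) / 2))⁻¹ * (X ^ b j - X ^ a i)

theorem kuperbergPolyMatrix_eval_exp (a : ι → ℕ) (b : κ → ℕ) (α β : ℝ) (i : ι) (j : κ) :
    (kuperbergPolyMatrix a b β i j).eval (Real.exp α) =
      Real.exp (α / 2) ^ a i * (Real.exp (α / 2) ^ b j *
        kuperbergMatrix (fun i => (a i : ℝ)) (fun j => (b j : ℝ)) α β i j) := by
  have hadd : Real.exp α ^ (a i + b j) - 1 =
      Real.exp (α / 2) ^ a i * Real.exp (α / 2) ^ b j *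
        (2 * Real.sinh (α * ((a i : ℝ) + b j) / 2)) := by
    rw [← Real.exp_zero]
    simp only [← Real.exp_nat_mul, exp_sub_exp_eq_mul_sinh, ← Real.exp_add]
    push_cast
    ring_nf
  have hsub : Real.exp α ^ b j - Real.exp α ^ a i =
      Real.exp (α / 2) ^ a i * Real.exp (α / 2) ^ b j *
        (2 * Real.sinh (α * ((b j : ℝ) - a i) / 2)) := by
    simp only [← Real.exp_nat_mul, exp_sub_exp_eq_mul_sinh, ← Real.exp_add]
    ring_nf
  simp only [kuperbergPolyMatrix, kuperbergMatrix, Matrix.of_apply, eval_sub, eval_mul, eval_C,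
    eval_pow, eval_X, eval_one, hadd, hsub, div_eq_mul_inv, mul_inv]
  ring

theorem rank_kuperbergPolyMatrix_eval_exp_le [Finite ι] [Fintype κ] {a : ι → ℕ} {b : κ → ℕ}
    {β : ℝ} (hβ : β ≠ 0) (hadd : ∀ i j, a i + b j ≠ 0) (hne : ∀ i j, a i ≠ b j)
    (k : ℤ) :
    ((kuperbergPolyMatrix a b β).map (eval (Real.exp (k * β)))).rank ≤ k.natAbs / 2 := by
  classical
  have := Fintype.ofFinite ι
  have hfactor : (kuperbergPolyMatrix a b β).map (eval (Real.exp (k * β))) =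
      Matrix.diagonal (fun i => Real.exp (k * β / 2) ^ a i) *
        (kuperbergMatrix (fun i => (a i : ℝ)) (fun j => (b j : ℝ)) (k * β) β *
          Matrix.diagonal fun j => Real.exp (k * β / 2) ^ b j) := by
    ext i j
    rw [Matrix.map_apply, kuperbergPolyMatrix_eval_exp, Matrix.diagonal_mul, Matrix.mul_diagonal,
      mul_comm (_ ^ b j)]
  rw [hfactor]
  refine (Matrix.rank_mul_le_right _ _).trans ((Matrix.rank_mul_le_left _ _).trans ?_)
  exact rank_kuperbergMatrix_intCast_mul_le k hβ (fun i j => mod_cast hadd i j)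
    fun i j => sub_ne_zero.2 (Nat.cast_injective.ne (hne i j).symm)

variable [Fintype ι] [DecidableEq ι] {a b : ι → ℕ}

theorem natDegree_det_kuperbergPolyMatrix_le (a b : ι → ℕ) (β : ℝ) :
    (kuperbergPolyMatrix a b β).det.natDegree ≤ ∑ i, a i + ∑ j, b j := by
  refine natDegree_det_le_sum_add_sum fun i j => ?_
  simp only [kuperbergPolyMatrix, Matrix.of_apply]
  compute_degree

/-- The product of the known linear factors of the Kuperberg determinant in `X = exp α`. A pair
`p = (i, j)` stands for the zero at `α = -(2 j - i) β`, and multiplicity is encoded by the number of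
pairs with the same `2 j - i`. -/
noncomputable def kuperbergDivisor (m : ℕ) (β : ℝ) : ℝ[X] :=
  ∏ p ∈ Icc 1 (2 * m + 1) ×ˢ Icc 1 m, (X - C (Real.exp (-(2 * (p.2 : ℝ) - p.1) * β)))

theorem kuperbergDivisor_monic (m : ℕ) (β : ℝ) : (kuperbergDivisor m β).Monic :=
  monic_prod_X_sub_C _ _

theorem card_Icc_product_Icc (m : ℕ) : #(Icc 1 (2 * m + 1) ×ˢ Icc 1 m) = m * (2 * m + 1) := by
  simp [mul_comm]

theorem natDegree_kuperbergDivisor (m : ℕ) (β : ℝ) :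
    (kuperbergDivisor m β).natDegree = m * (2 * m + 1) := by
  rw [kuperbergDivisor, natDegree_finsetProd_X_sub_C_eq_card, card_Icc_product_Icc]

theorem sum_Icc_product_Icc_two_mul_sub (m : ℕ) :
    ∑ p ∈ Icc 1 (2 * m + 1) ×ˢ Icc 1 m, (2 * (p.2 : ℝ) - p.1) = 0 := by
  have hreflect : ∑ p ∈ Icc 1 (2 * m + 1) ×ˢ Icc 1 m, (2 * (p.2 : ℝ) - p.1) =
      ∑ p ∈ Icc 1 (2 * m + 1) ×ˢ Icc 1 m, -(2 * (p.2 : ℝ) - p.1) := by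
    -- The central reflection of the rectangle negates `2 j - i`.
    let σ (p : ℕ × ℕ) : ℕ × ℕ := (2 * m + 2 - p.1, m + 1 - p.2)
    refine Finset.sum_nbij' σ σ ?_ ?_ ?_ ?_ ?_ <;> rintro ⟨i, j⟩ hp <;>
      simp only [σ, mem_product, mem_Icc, Prod.mk.injEq] at hp ⊢
    any_goals lia
    rw [Nat.cast_sub (by lia), Nat.cast_sub (by lia)]
    push_cast
    ring
  rw [Finset.sum_neg_distrib] at hreflect
  exact self_eq_neg.1 hreflect

theorem prod_Icc_product_Icc_exp_mul (m : ℕ) (c : ℝ) :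
    ∏ p ∈ Icc 1 (2 * m + 1) ×ˢ Icc 1 m, Real.exp (c * (2 * (p.2 : ℝ) - p.1)) = 1 := by
  rw [← Real.exp_sum, ← Finset.mul_sum, sum_Icc_product_Icc_two_mul_sub, mul_zero, Real.exp_zero]

theorem kuperbergDivisor_eval_exp (m : ℕ) (α β : ℝ) :
    (kuperbergDivisor m β).eval (Real.exp α) = Real.exp (α / 2) ^ (m * (2 * m + 1)) *
      ∏ p ∈ Icc 1 (2 * m + 1) ×ˢ Icc 1 m,
        2 * Real.sinh ((α + β * (2 * (p.2 : ℝ) - p.1)) / 2) := by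
  have hroot (k : ℝ) : Real.exp α - Real.exp (-k * β) = Real.exp (α / 2) *
      (Real.exp (-(β / 2) * k) * (2 * Real.sinh ((α + β * k) / 2))) := by
    rw [exp_sub_exp_eq_mul_sinh, ← mul_assoc (Real.exp (α / 2)), ← Real.exp_add]
    ring_nf
  simp only [kuperbergDivisor, eval_prod, eval_sub, eval_X, eval_C, hroot, Finset.prod_mul_distrib,
    prod_Icc_product_Icc_exp_mul, Finset.prod_const, card_Icc_product_Icc, one_mul]

theorem kuperbergDivisor_eval_zero (m : ℕ) (β : ℝ) :
    (kuperbergDivisor m β).eval 0 = (-1) ^ m := by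
  have hroot (k : ℝ) : 0 - Real.exp (-k * β) = -1 * Real.exp (-β * k) := by ring_nf
  simp only [kuperbergDivisor, eval_prod, eval_sub, eval_X, eval_C, hroot, Finset.prod_mul_distrib,
    prod_Icc_product_Icc_exp_mul, Finset.prod_const, card_Icc_product_Icc, mul_one]
  rw [pow_mul', Odd.neg_one_pow ⟨m, rfl⟩]

theorem card_filter_Icc_product_Icc_le (m : ℕ) (k : ℤ) :
    #{p ∈ Icc 1 (2 * m + 1) ×ˢ Icc 1 m | 2 * (p.2 : ℤ) - p.1 = k} ≤ m - k.natAbs / 2 := by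
  let J := Icc (k.toNat / 2 + 1) (m - (-k).toNat / 2)
  calc _ ≤ #J := by
        refine Finset.card_le_card_of_injOn Prod.snd ?_ ?_
        · rintro ⟨i, j⟩ hp
          simp only [coe_filter, Set.mem_ofPred_eq, mem_product, mem_Icc, J, coe_Icc, Set.mem_Icc]
            at hp ⊢
          lia
        · rintro ⟨i, j⟩ hp ⟨i', j'⟩ hp' hj
          simp only [coe_filter, Set.mem_ofPred_eq, Prod.mk.injEq] at hp hp' hj ⊢
          lia
    _ ≤ m - k.natAbs / 2 := by
        rw [Nat.card_Icc]
        lia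

theorem kuperbergDivisor_dvd_det {β : ℝ} (hβ : β ≠ 0) (hadd : ∀ i j, a i + b j ≠ 0)
    (hne : ∀ i j, a i ≠ b j) :
    kuperbergDivisor (Fintype.card ι) β ∣ (kuperbergPolyMatrix a b β).det := by
  have hinj : Function.Injective fun k : ℤ => Real.exp ((-k : ℤ) * β) := fun k l h => by
    simpa [hβ] using h
  have hcast (p : ℕ × ℕ) : -(2 * (p.2 : ℝ) - p.1) = (-(2 * (p.2 : ℤ) - p.1) : ℤ) := by
    push_cast
    ring
  simp only [kuperbergDivisor, hcast]
  rw [Finset.prod_comp (fun k : ℤ => X - C (Real.exp ((-k : ℤ) * β)))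
    (fun p : ℕ × ℕ => 2 * (p.2 : ℤ) - p.1)]
  refine Finset.prod_dvd_of_coprime
    (fun k _ l _ hkl => (pairwise_coprime_X_sub_C hinj hkl).pow) fun k _ => ?_
  refine (pow_dvd_pow _ ?_).trans (X_sub_C_pow_dvd_det _ _)
  have hrank := rank_kuperbergPolyMatrix_eval_exp_le hβ hadd hne (-k)
  rw [Int.natAbs_neg] at hrank
  exact (card_filter_Icc_product_Icc_le _ k).trans (Nat.sub_le_sub_left hrank _)

theorem det_kuperbergPolyMatrix_eval_exp (a b : ι → ℕ) (α β : ℝ) :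
    (kuperbergPolyMatrix a b β).det.eval (Real.exp α) =
      Real.exp (α / 2) ^ (∑ i, a i + ∑ j, b j) *
        (kuperbergMatrix (fun i => (a i : ℝ)) (fun j => (b j : ℝ)) α β).det := by
  rw [pow_add, ← Finset.prod_pow_eq_pow_sum, ← Finset.prod_pow_eq_pow_sum, mul_assoc,
    ← Matrix.det_mul_row, ← Matrix.det_mul_column, ← coe_evalRingHom, RingHom.map_det]
  congr 1
  ext i j
  exact kuperbergPolyMatrix_eval_exp a b α β i j

theorem det_kuperbergPolyMatrix_eval_zero (β : ℝ) (ha : ∀ i, a i ≠ 0)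
    (hb : ∀ j, b j ≠ 0) :
    (kuperbergPolyMatrix a b β).det.eval 0 = (-1) ^ Fintype.card ι *
      (Matrix.of fun i j => (2 * Real.sinh (β * ((a i : ℝ) + b j) / 2))⁻¹).det := by
  rw [← Matrix.det_neg, ← coe_evalRingHom, RingHom.map_det]
  congr 1
  ext i j
  simp [kuperbergPolyMatrix, ha, hb]

theorem det_kuperbergMatrix (α : ℝ) {β : ℝ} (hβ : β ≠ 0) (ha : ∀ i, a i ≠ 0) (hb : ∀ j, b j ≠ 0)
    (hne : ∀ i j, a i ≠ b j)
    (hsum : ∑ i, a i + ∑ j, b j = Fintype.card ι * (2 * Fintype.card ι + 1)) :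
    (kuperbergMatrix (fun i => (a i : ℝ)) (fun j => (b j : ℝ)) α β).det =
      (∏ p ∈ Icc 1 (2 * Fintype.card ι + 1) ×ˢ Icc 1 (Fintype.card ι),
        2 * Real.sinh ((α + β * (2 * (p.2 : ℝ) - p.1)) / 2)) *
      (Matrix.of fun i j => (2 * Real.sinh (β * ((a i : ℝ) + b j) / 2))⁻¹).det := by
  obtain ⟨c, hc⟩ : ∃ c, (kuperbergPolyMatrix a b β).det =
      C c * kuperbergDivisor (Fintype.card ι) β :=
    ⟨_, eq_leadingCoeff_mul_of_monic_of_dvd_of_natDegree_le (kuperbergDivisor_monic _ β)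
      (kuperbergDivisor_dvd_det hβ (fun i j => by simp [ha i]) hne)
      ((natDegree_det_kuperbergPolyMatrix_le a b β).trans_eq
        (hsum.trans (natDegree_kuperbergDivisor _ β).symm))⟩
  have hzero := det_kuperbergPolyMatrix_eval_zero β ha hb
  rw [hc, eval_mul, eval_C, kuperbergDivisor_eval_zero, mul_comm] at hzero
  have hexp := det_kuperbergPolyMatrix_eval_exp a b α β
  rw [hc, eval_mul, eval_C, kuperbergDivisor_eval_exp, hsum,
    mul_left_cancel₀ (pow_ne_zero _ (by norm_num)) hzero, mul_left_comm] at hexp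
  rw [← mul_left_cancel₀ (pow_ne_zero _ (Real.exp_ne_zero _)) hexp, mul_comm]

end KuperbergDeterminant

section HomogeneousLimit

open Topology

theorem tendsto_two_mul_sinh_mul_div_two_div (c : ℝ) :
    Tendsto (fun α : ℝ => 2 * Real.sinh (α * c / 2) / α) (𝓝[≠] 0) (𝓝 c) := by
  have hderiv : HasDerivAt (fun α : ℝ => 2 * Real.sinh (α * c / 2)) c 0 := by
    simpa [mul_div_cancel₀] using
      ((((hasDerivAt_id (0 : ℝ)).mul_const c).div_const 2).sinh).const_mul 2
  simpa [slope_fun_def_field] using hderiv.tendsto_slope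

variable {ι : Type*} [Fintype ι] [DecidableEq ι] {a b : ι → ℕ} {c : ℝ}

theorem det_kuperbergMatrix_div_pow {α : ℝ} (hα : α ≠ 0) (hc : c ≠ 0) (ha : ∀ i, a i ≠ 0)
    (hb : ∀ j, b j ≠ 0) (hne : ∀ i j, a i ≠ b j)
    (hsum : ∑ i, a i + ∑ j, b j = Fintype.card ι * (2 * Fintype.card ι + 1)) :
    (kuperbergMatrix (fun i => (a i : ℝ)) (fun j => (b j : ℝ)) α (c * α)).det /
        α ^ (2 * Fintype.card ι ^ 2) =
      (∏ p ∈ Icc 1 (2 * Fintype.card ι + 1) ×ˢ Icc 1 (Fintype.card ι),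
        2 * Real.sinh (α * (1 + c * (2 * (p.2 : ℝ) - p.1)) / 2) / α) *
      (Matrix.of fun i j => (2 * Real.sinh (α * (c * ((a i : ℝ) + b j)) / 2) / α)⁻¹).det := by
  have hscale : (Matrix.of fun i j => (2 * Real.sinh (α * (c * ((a i : ℝ) + b j)) / 2) / α)⁻¹) =
      α • Matrix.of fun i j => (2 * Real.sinh (c * α * ((a i : ℝ) + b j) / 2))⁻¹ := by
    ext i j
    simp only [Matrix.of_apply, Matrix.smul_apply, smul_eq_mul, inv_div, div_eq_mul_inv α,
      mul_left_comm α c, mul_assoc]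
  have hcard : Fintype.card ι * (2 * Fintype.card ι + 1) =
      2 * Fintype.card ι ^ 2 + Fintype.card ι := by ring
  have harg (k : ℝ) : α * (1 + c * k) = α + c * α * k := by ring
  simp only [harg]
  rw [det_kuperbergMatrix α (mul_ne_zero hc hα) ha hb hne hsum, hscale, Matrix.det_smul,
    Finset.prod_div_distrib, Finset.prod_const, card_Icc_product_Icc, hcard, pow_add]
  field_simp

theorem tendsto_det_kuperbergMatrix_div_pow (hc : c ≠ 0) (ha : ∀ i, a i ≠ 0) (hb : ∀ j, b j ≠ 0)
    (hne : ∀ i j, a i ≠ b j)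
    (hsum : ∑ i, a i + ∑ j, b j = Fintype.card ι * (2 * Fintype.card ι + 1)) :
    Tendsto (fun α : ℝ =>
      (kuperbergMatrix (fun i => (a i : ℝ)) (fun j => (b j : ℝ)) α (c * α)).det /
        α ^ (2 * Fintype.card ι ^ 2)) (𝓝[≠] 0)
      (𝓝 ((∏ p ∈ Icc 1 (2 * Fintype.card ι + 1) ×ˢ Icc 1 (Fintype.card ι),
          (1 + c * (2 * (p.2 : ℝ) - p.1))) *
        (Matrix.of fun i j => (c * ((a i : ℝ) + b j))⁻¹).det)) := by
  have hentry (i j : ι) : c * ((a i : ℝ) + b j) ≠ 0 :=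
    mul_ne_zero hc (by exact_mod_cast (by simp [ha i] : a i + b j ≠ 0))
  have hcauchy : Tendsto (fun α : ℝ => (Matrix.of fun i j =>
      (2 * Real.sinh (α * (c * ((a i : ℝ) + b j)) / 2) / α)⁻¹).det) (𝓝[≠] 0)
      (𝓝 (Matrix.of fun i j => (c * ((a i : ℝ) + b j))⁻¹).det) :=
    (continuous_id.matrix_det.tendsto _).comp (tendsto_pi_nhds.2 fun i => tendsto_pi_nhds.2 fun j =>
      (tendsto_two_mul_sinh_mul_div_two_div _).inv₀ (hentry i j))
  refine ((tendsto_finsetProd _ fun p _ =>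
    tendsto_two_mul_sinh_mul_div_two_div _).mul hcauchy).congr' ?_
  filter_upwards [self_mem_nhdsWithin] with α hα
  exact (det_kuperbergMatrix_div_pow hα hc ha hb hne hsum).symm

theorem sum_fin_succ_add_sum_fin_succ_add (m : ℕ) :
    ∑ i : Fin m, ((i : ℕ) + 1) + ∑ j : Fin m, ((j : ℕ) + 1 + m) = m * (2 * m + 1) := by
  have hconcat : ∑ i : Fin m, ((i : ℕ) + 1) + ∑ j : Fin m, ((j : ℕ) + 1 + m) =
      ∑ k ∈ range (2 * m + 1), k := by
    rw [Finset.sum_range_succ', two_mul, Finset.sum_range_add, Finset.sum_range, Finset.sum_range]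
    simp only [add_zero, add_comm m, add_right_comm]
  rw [hconcat, Finset.sum_range_id, Nat.add_sub_cancel, mul_left_comm,
    Nat.mul_div_cancel_left _ two_pos, mul_comm]

end HomogeneousLimit

theorem det_U_homogeneous_limit_general (m : ℕ) {c : ℝ} (hc : c ≠ 0) :
    Tendsto (fun α : ℝ =>
      Matrix.det (Matrix.of fun i j : Fin m =>
        Real.sinh (α * (((i : ℕ) + 1 : ℝ) + ((j : ℕ) + 1 : ℝ) + m) / 2) /
          Real.sinh (c * α * (((i : ℕ) + 1 : ℝ) + ((j : ℕ) + 1 : ℝ) + m) / 2) -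
        Real.sinh (α * (((j : ℕ) + 1 : ℝ) - ((i : ℕ) + 1 : ℝ) + m) / 2) /
          Real.sinh (c * α * (((j : ℕ) + 1 : ℝ) - ((i : ℕ) + 1 : ℝ) + m) / 2)) /
      α ^ (2 * m ^ 2))
      (nhdsWithin 0 {(0 : ℝ)}ᶜ)
      (nhds
        ((∏ j ∈ Icc 1 (2 * m), ∏ i ∈ Ico 1 j, c * ((j : ℝ) - (i : ℝ))) *
         (∏ i ∈ Icc 1 (2 * m + 1), ∏ j ∈ Icc 1 m, (1 + c * (2 * (j : ℝ) - (i : ℝ)))) /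
         (∏ i ∈ Icc 1 m, ∏ j ∈ Icc 1 m,
           c ^ 2 * ((m : ℝ) + (j : ℝ) - (i : ℝ)) * ((m : ℝ) + (j : ℝ) + (i : ℝ))))) := by
  have hlim := tendsto_det_kuperbergMatrix_div_pow (a := fun i : Fin m => (i : ℕ) + 1)
    (b := fun j => (j : ℕ) + 1 + m) hc (fun i => by lia) (fun j => by lia) (fun i j => by lia)
    (by simpa only [Fintype.card_fin] using sum_fin_succ_add_sum_fin_succ_add m)
  rw [Fintype.card_fin, det_cauchy_consecutive m hc, Finset.prod_product, ← mul_div_assoc,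
    mul_comm (∏ i ∈ Icc 1 (2 * m + 1), _)] at hlim
  refine hlim.congr fun α => ?_
  congr! 3
  ext i j
  simp only [kuperbergMatrix, Matrix.of_apply]
  push_cast
  ring_nf

/-- For `m ≥ 1`, the limit as `α → 0` (along `α ≠ 0`) of `det U(α) / α^(2m²)`, where
`U(α)_{ij} = sinh(α(i+j+m)/2)/sinh(3α(i+j+m)/2) − sinh(α(j−i+m)/2)/sinh(3α(j−i+m)/2)`,
exists and equals the explicit rational product
`[∏_{1≤i<j≤2m} 3(j−i)] · [∏_{i=1}^{2m+1} ∏_{j=1}^{m} (1+3(2j−i))] /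
 [∏_{i=1}^{m} ∏_{j=1}^{m} 9(m+j−i)(m+j+i)]`. -/
theorem det_U_homogeneous_limit (m : ℕ) (hm : 1 ≤ m) :
    Tendsto (fun α : ℝ =>
      Matrix.det (Matrix.of fun i j : Fin m =>
        Real.sinh (α * (((i : ℕ) + 1 : ℝ) + ((j : ℕ) + 1 : ℝ) + m) / 2) /
          Real.sinh (3 * α * (((i : ℕ) + 1 : ℝ) + ((j : ℕ) + 1 : ℝ) + m) / 2) -
        Real.sinh (α * (((j : ℕ) + 1 : ℝ) - ((i : ℕ) + 1 : ℝ) + m) / 2) /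
          Real.sinh (3 * α * (((j : ℕ) + 1 : ℝ) - ((i : ℕ) + 1 : ℝ) + m) / 2)) /
      α ^ (2 * m ^ 2))
      (nhdsWithin 0 {(0 : ℝ)}ᶜ)
      (nhds
        ((∏ j ∈ Icc 1 (2 * m), ∏ i ∈ Ico 1 j, 3 * ((j : ℝ) - (i : ℝ))) *
         (∏ i ∈ Icc 1 (2 * m + 1), ∏ j ∈ Icc 1 m, (1 + 3 * (2 * (j : ℝ) - (i : ℝ)))) /
         (∏ i ∈ Icc 1 m, ∏ j ∈ Icc 1 m,
           9 * ((m : ℝ) + (j : ℝ) - (i : ℝ)) * ((m : ℝ) + (j : ℝ) + (i : ℝ))))) := by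
  simpa only [show (3 : ℝ) ^ 2 = 9 by norm_num] using
    det_U_homogeneous_limit_general m (three_ne_zero (α := ℝ))
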